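/- Let k ≥ 3 be an integer, let p > q be prime numbers, and let m be a positive integer with m(q−1) ≥ p−1. Then the multisets λ = {q(1 + m(p−1)), 1 + m(q−1), p, 1, ..., 1} and μ = {p(1 + m(q−1)), 1 + m(p−1), q, 1, ..., 1} (each with k−3 parts equal to 1) are distinct partitions of p + q + k − 2 + m(pq−1), each with exactly k parts, and pre_k(λ) = pre_k(μ) = {pq(1 + m(p−1))(1 + m(q−1))}. -/

import Mathlib

/-- `preK k P` is the multiset of products of all `k`-element sub-multisets of the
multiset of parts `P`; it is empty when `P` has fewer than `k` elements. -/
def preK (k : ℕ) (P : Multiset ℕ) : Multiset ℕ :=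
  (P.powersetCard k).map Multiset.prod

/-! A partition with exactly `k` parts has a single `k`-element sub-multiset of parts, so `pre_k`
only remembers the product of its parts. Exchanging `p` and `q` in
`{q(1 + m(p - 1)), 1 + m(q - 1), p, 1, …, 1}` preserves the product, and also the sum because
`q(p - 1) + (q - 1) = pq - 1` is symmetric in `p` and `q`. The two multisets differ because `q`
occurs in only one of them once `m ≥ 2`, which `m(q - 1) ≥ p - 1 > q - 1` forces. -/

theorem preK_eq_singleton_prod {k : ℕ} {P : Multiset ℕ} (hP : P.card = k) :
    preK k P = {P.prod} := by
  subst hP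
  rw [preK, Multiset.powersetCard_self, Multiset.map_singleton]

/-- The multiset `{q(1 + m(p - 1)), 1 + m(q - 1), p, 1, …, 1}` with `k - 3` parts equal to `1`,
meant for `3 ≤ k` and positive `p` and `q`, since the subtractions are truncated. It is the
partition `λ` of the theorem, and `twinParts k m q p` is the partition `μ`. -/
def twinParts (k m p q : ℕ) : Multiset ℕ :=
  q * (1 + m * (p - 1)) ::ₘ (1 + m * (q - 1)) ::ₘ p ::ₘ Multiset.replicate (k - 3) 1

namespace twinParts

variable {k m p q : ℕ}

theorem mem_iff {x : ℕ} :
    x ∈ twinParts k m p q ↔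
      x = q * (1 + m * (p - 1)) ∨ x = 1 + m * (q - 1) ∨ x = p ∨ (k - 3 ≠ 0 ∧ x = 1) := by
  simp only [twinParts, Multiset.mem_cons, Multiset.mem_replicate]

theorem card_eq (hk : 3 ≤ k) : (twinParts k m p q).card = k := by
  simp only [twinParts, Multiset.card_cons, Multiset.card_replicate]
  omega

theorem pos_of_mem (hp : 0 < p) (hq : 0 < q) : ∀ x ∈ twinParts k m p q, 0 < x := by
  intro x hx
  rcases mem_iff.1 hx with rfl | rfl | rfl | ⟨-, rfl⟩ <;> positivity

theorem prod_eq :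
    (twinParts k m p q).prod = p * q * (1 + m * (p - 1)) * (1 + m * (q - 1)) := by
  simp only [twinParts, Multiset.prod_cons, Multiset.prod_replicate, one_pow]
  ring

theorem sum_eq (hk : 3 ≤ k) (hp : 0 < p) (hq : 0 < q) :
    (twinParts k m p q).sum = p + q + k - 2 + m * (p * q - 1) := by
  have coeff_eq : q * (p - 1) + (q - 1) = p * q - 1 := by
    have : q ≤ q * p := Nat.le_mul_of_pos_right q hp
    rw [Nat.mul_sub_one, mul_comm p q]
    omega
  calc (twinParts k m p q).sum
      = q * (1 + m * (p - 1)) + (1 + m * (q - 1) + (p + (k - 3))) := by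
        simp only [twinParts, Multiset.sum_cons, Multiset.sum_replicate, smul_eq_mul, mul_one]
    _ = (p + q + 1 + (k - 3)) + m * (q * (p - 1) + (q - 1)) := by ring
    _ = p + q + k - 2 + m * (p * q - 1) := by
        rw [coeff_eq]
        omega

theorem preK_eq (hk : 3 ≤ k) :
    preK k (twinParts k m p q) = {p * q * (1 + m * (p - 1)) * (1 + m * (q - 1))} := by
  rw [preK_eq_singleton_prod (card_eq hk), prod_eq]

theorem left_mem : p ∈ twinParts k m p q :=
  mem_iff.2 (.inr (.inr (.inl rfl)))

theorem right_notMem (hp : 1 < p) (hq : 1 < q) (hpq : p ≠ q) (hm : 1 < m) :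
    q ∉ twinParts k m p q := by
  have lt_first : q < q * (1 + m * (p - 1)) := by
    have : 0 < m * (p - 1) := Nat.mul_pos (by omega) (by omega)
    exact lt_mul_of_one_lt_right (by omega) (by omega)
  have lt_second : q < 1 + m * (q - 1) := by
    have : q - 1 < m * (q - 1) := lt_mul_of_one_lt_left (by omega) hm
    omega
  rw [mem_iff]
  omega

theorem ne_swap (hp : 1 < p) (hq : 1 < q) (hpq : p ≠ q) (hm : 1 < m) :
    twinParts k m p q ≠ twinParts k m q p :=
  (ne_of_mem_of_not_mem' left_mem (right_notMem hp hq hpq hm)).symm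

end twinParts

theorem stmt_4_general {k p q m : ℕ} (hk : 3 ≤ k) (hp : 1 < p) (hq : 1 < q) (hpq : p ≠ q)
    (hm : 1 < m) :
    let lam := twinParts k m p q
    let mu := twinParts k m q p
    lam ≠ mu ∧
    (∀ x ∈ lam, 0 < x) ∧ lam.sum = p + q + k - 2 + m * (p * q - 1) ∧ lam.card = k ∧
    (∀ x ∈ mu, 0 < x) ∧ mu.sum = p + q + k - 2 + m * (p * q - 1) ∧ mu.card = k ∧
    preK k lam = {p * q * (1 + m * (p - 1)) * (1 + m * (q - 1))} ∧
    preK k mu = {p * q * (1 + m * (p - 1)) * (1 + m * (q - 1))} := by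
  have hp₀ : 0 < p := by omega
  have hq₀ : 0 < q := by omega
  refine ⟨twinParts.ne_swap hp hq hpq hm,
    twinParts.pos_of_mem hp₀ hq₀, twinParts.sum_eq hk hp₀ hq₀, twinParts.card_eq hk,
    twinParts.pos_of_mem hq₀ hp₀, ?_, twinParts.card_eq hk, twinParts.preK_eq hk, ?_⟩
  · rw [twinParts.sum_eq hk hq₀ hp₀, add_comm q p, mul_comm q p]
  · rw [twinParts.preK_eq hk, mul_comm q p, mul_right_comm]

theorem stmt_4 (k p q m : ℕ) (hk : 3 ≤ k) (hp : p.Prime) (hq : q.Prime)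
    (hpq : q < p) (hm : 1 ≤ m) (hm' : p - 1 ≤ m * (q - 1)) :
    let lam : Multiset ℕ :=
      q * (1 + m * (p - 1)) ::ₘ (1 + m * (q - 1)) ::ₘ p ::ₘ Multiset.replicate (k - 3) 1
    let mu : Multiset ℕ :=
      p * (1 + m * (q - 1)) ::ₘ (1 + m * (p - 1)) ::ₘ q ::ₘ Multiset.replicate (k - 3) 1
    lam ≠ mu ∧
    (∀ x ∈ lam, 0 < x) ∧ lam.sum = p + q + k - 2 + m * (p * q - 1) ∧ lam.card = k ∧
    (∀ x ∈ mu, 0 < x) ∧ mu.sum = p + q + k - 2 + m * (p * q - 1) ∧ mu.card = k ∧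
    preK k lam = {p * q * (1 + m * (p - 1)) * (1 + m * (q - 1))} ∧
    preK k mu = {p * q * (1 + m * (p - 1)) * (1 + m * (q - 1))} := by
  have lt_mul : q - 1 < m * (q - 1) := (Nat.sub_lt_sub_right hq.one_le hpq).trans_le hm'
  have one_lt_m : 1 < m := (lt_mul_iff_one_lt_left (Nat.sub_pos_of_lt hq.one_lt)).1 lt_mul
  exact stmt_4_general hk hp.one_lt hq.one_lt hpq.ne' one_lt_m
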